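/- arXiv:hep-th/9710202 — 2 statements merged into one kernel-verified Lean document; each statement's English description precedes it below -/
import Mathlib

section
/- Let n ≥ 1 and m ≥ 1, and let Y_1, …, Y_m be n×n complex matrices, each symmetric (Y_αᵀ = Y_α), satisfying the Clifford-type Yukawa relations Y_α* Y_β + Y_β* Y_α = 2 δ_{αβ} I_n for all α, β ∈ {1,…,m} (where * denotes conjugate transpose). Then there exists a unitary n×n complex matrix U such that Uᵀ Y_1 U = I_n, and for every β ∈ {2,…,m} there exists a real symmetric n×n matrix N_β with Uᵀ Y_β U = i · N_β, N_β² = I_n, and N_β N_γ = − N_γ N_β for all β ≠ γ in {2,…,m}. (A family of Yukawa couplings satisfying the diagonal anticommutation relations is equivalent, under the U(n) symmetry of the Yukawa finiteness condition, to the union of the identity matrix and a set of real, symmetric, pairwise anticommuting generators of a Clifford algebra.) -/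
open Matrix Complex

/-!
Since `Y α₀` is symmetric and unitary, it has a unitary inverse square root `U` that is a polynomial
in `Y α₀`, hence again symmetric, and `Uᵀ * Y α₀ * U = 1`. Unitary congruence `Y ↦ Uᵀ * Y * U`
preserves both symmetry and the Yukawa relations, and once one member of the family is the identity,
its relation with any other member `Z` reads `Zᴴ = -Z`. For a symmetric `Z` this says that `Z` is
purely imaginary, `Z = I • N`, and the relations between the `Z`s become Clifford relations between
the `N`s.
-/

section InverseSquareRoot

open Polynomial

theorem exists_aeval_mem_unitary_mul_mul_eq_one {A : Type*} [CStarAlgebra A] {u : A}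
    (hu : u ∈ unitary A) (hfin : (spectrum ℂ u).Finite) :
    ∃ q : ℂ[X], aeval u q ∈ unitary A ∧ aeval u q * u * aeval u q = 1 := by
  have hnormal : IsStarNormal u := isStarNormal_of_mem_unitary hu
  -- The branch cut of the square root may meet the spectrum; as the spectrum is finite,
  -- interpolation still replaces the root by a polynomial.
  let g : ℂ → ℂ := fun z ↦ z⁻¹ ^ (2⁻¹ : ℂ)
  have hg (z : ℂ) : g z ^ 2 = z⁻¹ := cpow_ofNat_inv_pow _ 2
  let q : ℂ[X] := Lagrange.interpolate hfin.toFinset id g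
  have hq : ∀ z ∈ spectrum ℂ u, q.eval z = g z := fun z hz ↦
    Lagrange.eval_interpolate_at_node g Function.injective_id.injOn (hfin.mem_toFinset.mpr hz)
  have hnorm : ∀ z ∈ spectrum ℂ u, ‖z‖ = 1 := fun _ hz ↦
    spectrum.norm_eq_one_of_unitary hu hz
  refine ⟨q, ?_, ?_⟩
  · rw [← cfc_polynomial q u, cfc_unitary_iff q.eval u]
    intro z hz
    have hgz : ‖g z‖ = 1 := by
      rw [← pow_eq_one_iff_of_nonneg (norm_nonneg _) two_ne_zero, ← norm_pow, hg, norm_inv,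
        hnorm z hz, inv_one]
    rw [hq z hz, star_def, conj_mul', hgz, ofReal_one, one_pow]
  · suffices aeval u (q * X * q) = 1 by simpa only [map_mul, aeval_X] using this
    rw [← cfc_polynomial (q * X * q) u, ← cfc_one ℂ u]
    refine cfc_congr fun z hz ↦ ?_
    have hz0 : z ≠ 0 := norm_ne_zero_iff.mp (by simp [hnorm z hz])
    calc (q * X * q).eval z = g z ^ 2 * z := by rw [eval_mul, eval_mul, eval_X, hq z hz]; ring
      _ = 1 := by rw [hg, inv_mul_cancel₀ hz0]

theorem isSymm_aeval {ι R S : Type*} [Fintype ι] [DecidableEq ι] [CommSemiring R] [CommSemiring S]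
    [Algebra S R] {A : Matrix ι ι R} (hA : A.IsSymm) (q : S[X]) : (aeval A q).IsSymm := by
  simp only [IsSymm, aeval_eq_sum_range, transpose_sum, transpose_smul, transpose_pow, hA.eq]

open scoped Matrix.Norms.L2Operator in
theorem exists_mem_unitaryGroup_transpose_mul_mul_eq_one {ι : Type*} [Fintype ι] [DecidableEq ι]
    {A : Matrix ι ι ℂ} (hA : A.IsSymm) (hu : A ∈ unitaryGroup ι ℂ) :
    ∃ U ∈ unitaryGroup ι ℂ, Uᵀ * A * U = 1 := by
  obtain ⟨q, hq, hinv⟩ := exists_aeval_mem_unitary_mul_mul_eq_one hu A.finite_spectrum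
  exact ⟨aeval A q, hq, by rwa [(isSymm_aeval hA q).eq]⟩

end InverseSquareRoot

section ImaginaryMatrices

theorem eq_I_smul_map_im_of_isSymm {ι : Type*} {Z : Matrix ι ι ℂ} (hsym : Z.IsSymm)
    (hskew : Zᴴ = -Z) : Z = I • (Z.map im).map ofReal := by
  ext i j
  have hconj : star (Z i j) = -Z i j := by
    rw [← hsym.apply i j, ← conjTranspose_apply, hskew, neg_apply, hsym.apply]
  have hre : (Z i j).re = 0 := by
    have := congrArg re hconj
    simp only [star_def, conj_re, neg_re] at this
    linarith
  apply Complex.ext <;> simp [hre]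

theorem conjTranspose_I_smul_map_mul {k l m : Type*} [Fintype k] (M : Matrix k l ℝ)
    (N : Matrix k m ℝ) : (I • M.map ofReal)ᴴ * (I • N.map ofReal) = (Mᴴ * N).map ofReal := by
  have hstar : (M.map ofReal)ᴴ = Mᴴ.map ofReal := by ext; simp
  rw [conjTranspose_smul, hstar, Matrix.smul_mul, Matrix.mul_smul, smul_smul, star_def, conj_I,
    neg_mul, I_mul_I, neg_neg, one_smul]
  exact (Matrix.map_mul (f := ofRealHom)).symm

end ImaginaryMatrices

/-- The Clifford-type Yukawa relations for a family of square matrices over a star ring, indexed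
by an arbitrary type. -/
def CliffordYukawa {ι κ R : Type*} [Fintype ι] [DecidableEq ι] [DecidableEq κ] [Semiring R]
    [StarRing R] (Y : κ → Matrix ι ι R) : Prop :=
  ∀ α β, (Y α)ᴴ * Y β + (Y β)ᴴ * Y α = if α = β then (2 : R) • (1 : Matrix ι ι R) else 0

namespace CliffordYukawa

variable {ι κ R : Type*} [Fintype ι] [DecidableEq ι] [DecidableEq κ]

theorem comp_injective {κ' : Type*} [DecidableEq κ'] [Semiring R] [StarRing R]
    {Y : κ → Matrix ι ι R} (hY : CliffordYukawa Y) {f : κ' → κ} (hf : f.Injective) :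
    CliffordYukawa (Y ∘ f) := fun α β ↦ by
  simpa only [Function.comp_apply, hf.eq_iff] using hY (f α) (f β)

theorem conjTranspose_mul_eq_neg [Ring R] [StarRing R] {Y : κ → Matrix ι ι R}
    (hY : CliffordYukawa Y) {α β : κ} (hne : α ≠ β) : (Y α)ᴴ * Y β = -((Y β)ᴴ * Y α) :=
  eq_neg_of_add_eq_zero_left ((hY α β).trans (if_neg hne))

theorem conjTranspose_eq_neg_of_eq_one [Ring R] [StarRing R] {Y : κ → Matrix ι ι R}
    (hY : CliffordYukawa Y) {α β : κ} (hα : Y α = 1) (hne : β ≠ α) : (Y β)ᴴ = -Y β := by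
  simpa only [hα, mul_one, conjTranspose_one, one_mul] using hY.conjTranspose_mul_eq_neg hne

theorem mul_eq_neg_mul_of_isHermitian [Ring R] [StarRing R] {Y : κ → Matrix ι ι R}
    (hY : CliffordYukawa Y) {α β : κ} (hα : (Y α).IsHermitian) (hβ : (Y β).IsHermitian)
    (hne : α ≠ β) : Y α * Y β = -(Y β * Y α) := by
  simpa only [hα.eq, hβ.eq] using hY.conjTranspose_mul_eq_neg hne

theorem conjTranspose_mul_self [DivisionRing R] [NeZero (2 : R)] [StarRing R]
    {Y : κ → Matrix ι ι R} (hY : CliffordYukawa Y) (α : κ) : (Y α)ᴴ * Y α = 1 := by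
  have h := hY α α
  rw [if_pos rfl, ← two_smul R] at h
  exact smul_right_injective _ (two_ne_zero (α := R)) h

theorem mul_self_eq_one_of_isHermitian [DivisionRing R] [NeZero (2 : R)] [StarRing R]
    {Y : κ → Matrix ι ι R} (hY : CliffordYukawa Y) {α : κ} (hα : (Y α).IsHermitian) :
    Y α * Y α = 1 := by
  simpa only [hα.eq] using hY.conjTranspose_mul_self α

theorem transpose_mul_mul [CommRing R] [StarRing R] {Y : κ → Matrix ι ι R}
    (hY : CliffordYukawa Y) {U : Matrix ι ι R} (hU : U ∈ unitaryGroup ι R) :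
    CliffordYukawa fun α ↦ Uᵀ * Y α * U := fun α β ↦ by
  have hUU : Uᴴ * U = 1 := mem_unitaryGroup_iff'.mp hU
  have hUt : Uᵀᴴ * Uᵀ = 1 := mem_unitaryGroup_iff'.mp (transpose_mem_unitaryGroup_iff.mpr hU)
  have hprod (A B : Matrix ι ι R) : (Uᵀ * A * U)ᴴ * (Uᵀ * B * U) = Uᴴ * (Aᴴ * B) * U :=
    calc (Uᵀ * A * U)ᴴ * (Uᵀ * B * U) = Uᴴ * (Aᴴ * (Uᵀᴴ * Uᵀ) * B) * U := by
          simp only [conjTranspose_mul, Matrix.mul_assoc]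
      _ = Uᴴ * (Aᴴ * B) * U := by rw [hUt, Matrix.mul_one]
  calc (Uᵀ * Y α * U)ᴴ * (Uᵀ * Y β * U) + (Uᵀ * Y β * U)ᴴ * (Uᵀ * Y α * U)
      = Uᴴ * ((Y α)ᴴ * Y β + (Y β)ᴴ * Y α) * U := by
        rw [hprod, hprod, Matrix.mul_add, Matrix.add_mul]
    _ = if α = β then (2 : R) • (1 : Matrix ι ι R) else 0 := by
        rw [hY α β]; split_ifs <;> simp [hUU]

theorem of_I_smul_map_ofReal {N : κ → Matrix ι ι ℝ}
    (hN : CliffordYukawa fun α ↦ I • (N α).map ofReal) : CliffordYukawa N := fun α β ↦ by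
  apply map_injective ofReal_injective
  have h := hN α β
  rw [conjTranspose_I_smul_map_mul, conjTranspose_I_smul_map_mul] at h
  change ((N α)ᴴ * N β + (N β)ᴴ * N α).map ofReal = Matrix.map _ ofReal
  rw [Matrix.map_add _ ofReal_add, h]
  split_ifs <;> ext i j <;> simp [one_apply, apply_ite ofReal]

end CliffordYukawa

theorem stmt_0_general {ι κ : Type*} [Fintype ι] [DecidableEq ι] [DecidableEq κ]
    {Y : κ → Matrix ι ι ℂ} (hsym : ∀ α, (Y α).IsSymm) (hY : CliffordYukawa Y) (α₀ : κ) :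
    ∃ (U : Matrix ι ι ℂ) (N : κ → Matrix ι ι ℝ),
      Uᴴ * U = 1 ∧
      Uᵀ * Y α₀ * U = 1 ∧
      (∀ β, β ≠ α₀ →
        (N β)ᵀ = N β ∧ Uᵀ * Y β * U = I • (N β).map ofReal ∧ N β * N β = 1) ∧
      (∀ β γ, β ≠ α₀ → γ ≠ α₀ → β ≠ γ → N β * N γ = -(N γ * N β)) := by
  obtain ⟨U, hU, hU₀⟩ := exists_mem_unitaryGroup_transpose_mul_mul_eq_one (hsym α₀)
    (mem_unitaryGroup_iff'.mpr (hY.conjTranspose_mul_self α₀))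
  let Z : κ → Matrix ι ι ℂ := fun α ↦ Uᵀ * Y α * U
  let N : κ → Matrix ι ι ℝ := fun α ↦ (Z α).map im
  have hZ : CliffordYukawa Z := hY.transpose_mul_mul hU
  have hZsym (α : κ) : (Z α).IsSymm := by
    simp only [Z, IsSymm, transpose_mul, transpose_transpose, (hsym α).eq, Matrix.mul_assoc]
  have hZN (β : κ) (hβ : β ≠ α₀) : Z β = I • (N β).map ofReal :=
    eq_I_smul_map_im_of_isSymm (hZsym β) (hZ.conjTranspose_eq_neg_of_eq_one hU₀ hβ)
  have hNsym (β : κ) : (N β).IsSymm := (hZsym β).map im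
  have hNherm (β : κ) : (N β).IsHermitian := by
    rw [IsHermitian, conjTranspose_eq_transpose_of_trivial, (hNsym β).eq]
  have hN : CliffordYukawa fun β : {β // β ≠ α₀} ↦ N β := by
    refine .of_I_smul_map_ofReal ?_
    simpa only [Function.comp_def, fun β : {β // β ≠ α₀} ↦ hZN β β.2] using
      hZ.comp_injective (Subtype.val_injective (p := (· ≠ α₀)))
  exact ⟨U, N, mem_unitaryGroup_iff'.mp hU, hU₀,
    fun β hβ ↦ ⟨hNsym β, hZN β hβ, hN.mul_self_eq_one_of_isHermitian (α := ⟨β, hβ⟩) (hNherm β)⟩,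
    fun β γ hβ hγ hne ↦ hN.mul_eq_neg_mul_of_isHermitian (α := ⟨β, hβ⟩) (β := ⟨γ, hγ⟩)
      (hNherm β) (hNherm γ) (by simpa using hne)⟩

/-- Clifford-type Yukawa couplings are equivalent, under a unitary change of
basis, to the union of the identity matrix and a set of real, symmetric,
pairwise anticommuting Clifford generators. -/
theorem stmt_0 (n m : ℕ) (hn : 1 ≤ n) (hm : 1 ≤ m)
    (Y : Fin m → Matrix (Fin n) (Fin n) ℂ)
    (hsym : ∀ α, (Y α)ᵀ = Y α)
    (hcliff : ∀ α β, (Y α)ᴴ * Y β + (Y β)ᴴ * Y α =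
      if α = β then (2 : ℂ) • (1 : Matrix (Fin n) (Fin n) ℂ) else 0) :
    ∃ (U : Matrix (Fin n) (Fin n) ℂ) (N : Fin m → Matrix (Fin n) (Fin n) ℝ),
      Uᴴ * U = 1 ∧
      Uᵀ * Y ⟨0, hm⟩ * U = 1 ∧
      (∀ β, β ≠ ⟨0, hm⟩ →
        (N β)ᵀ = N β ∧
        Uᵀ * Y β * U = Complex.I • (N β).map (Complex.ofReal) ∧
        N β * N β = 1) ∧
      (∀ β γ, β ≠ ⟨0, hm⟩ → γ ≠ ⟨0, hm⟩ → β ≠ γ →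
        N β * N γ = - (N γ * N β)) :=
  stmt_0_general hsym hcliff ⟨0, hm⟩
end

section
/- Let n ≥ 1, m ≥ 1, let Y_1, …, Y_m be n×n complex matrices, each symmetric (Y_αᵀ = Y_α), and suppose there are real numbers u_α (α ∈ {1,…,m}) and v_i (i ∈ {1,…,n}) such that Y_α* Y_β + Y_β* Y_α = 2 δ_{αβ} X_α for all α, β, where X_α is the diagonal matrix with i-th diagonal entry u_α · v_i (tensorial form). Define y_F^i := Σ_{β=1}^m (X_β)_{ii} = (Σ_β u_β) v_i. Then for every α and all indices i, j: (Y_α)_{ij} · (y_F^i − y_F^j) = 0. -/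
open Matrix
open scoped BigOperators

/-! For symmetric `A` the transpose of `Aᴴ * A` is `A * Aᴴ`, so `A` is normal as soon as `Aᴴ * A` is
diagonal. A normal matrix commutes with `Aᴴ * A`; if the latter is `diagonal (a • v)`, comparing the
`(i, j)` entries of the two products gives `a * (A i j * (v i - v j)) = 0`. Either `a` can be
cancelled, or `Aᴴ * A = 0` and hence `A = 0`. -/

section

variable {ι R : Type*}

theorem isStarNormal_of_isSymm_of_isSymm_conjTranspose_mul_self [Fintype ι] [CommSemiring R]
    [StarRing R] {A : Matrix ι ι R} (hA : A.IsSymm) (hAA : (Aᴴ * A).IsSymm) : IsStarNormal A := by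
  refine ⟨?_⟩
  calc Aᴴ * A = (Aᴴ * A)ᵀ := hAA.eq.symm
    _ = Aᵀ * Aᴴᵀ := transpose_mul Aᴴ A
    _ = A * Aᴴ := by rw [hA.eq, hA.conjTranspose.eq]

theorem commute_star_mul_self_of_isStarNormal [Semigroup R] [Star R] {a : R}
    (ha : IsStarNormal a) : Commute a (star a * a) :=
  ha.star_comm_self.symm.mul_right (Commute.refl a)

theorem apply_mul_sub_eq_zero_of_commute_diagonal [Fintype ι] [DecidableEq ι] [CommRing R]
    {A : Matrix ι ι R} {d : ι → R} (h : Commute A (diagonal d)) (i j : ι) :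
    A i j * (d i - d j) = 0 := by
  have entry : A i j * d j = d i * A i j := by
    simpa only [mul_diagonal, diagonal_mul] using congrFun₂ h.eq i j
  linear_combination -entry

theorem stmt_15_general [Fintype ι] [DecidableEq ι] [CommRing R] [NoZeroDivisors R]
    [PartialOrder R] [StarRing R] [StarOrderedRing R] {A : Matrix ι ι R} (hA : IsStarNormal A)
    {a : R} {v : ι → R} (hAA : Aᴴ * A = diagonal (a • v)) (i j : ι) :
    A i j * (v i - v j) = 0 := by
  by_cases ha : a = 0
  · have hA_zero : A = 0 := by
      rwa [ha, zero_smul, diagonal_zero', conjTranspose_mul_self_eq_zero] at hAA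
    rw [hA_zero, Matrix.zero_apply, zero_mul]
  · have hcomm : Commute A (diagonal (a • v)) := hAA ▸ commute_star_mul_self_of_isStarNormal hA
    have scaled : a * (A i j * (v i - v j)) = 0 := by
      simpa only [Pi.smul_apply, smul_eq_mul, ← mul_sub, mul_left_comm] using
        apply_mul_sub_eq_zero_of_commute_diagonal hcomm i j
    exact (mul_eq_zero.mp scaled).resolve_left ha

end

/-- For symmetric Yukawa couplings with diagonalized tensorial
`Yαᴴ Yβ + Yβᴴ Yα = 2 δ_{αβ} Xα`, `(Xα)_{ii} = u_α v_i`, the Yukawa couplings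
connect only fermions with equal trace eigenvalues `y_F^i = (Σ_β u_β) v_i`:
`(Yα)_{ij} (y_F^i − y_F^j) = 0`. -/
theorem stmt_15 (n m : ℕ) (hn : 1 ≤ n) (hm : 1 ≤ m)
    (Y : Fin m → Matrix (Fin n) (Fin n) ℂ)
    (u : Fin m → ℝ) (v : Fin n → ℝ)
    (hsym : ∀ α, (Y α)ᵀ = Y α)
    (hdiag : ∀ α β, (Y α)ᴴ * Y β + (Y β)ᴴ * Y α =
      if α = β then (2 : ℂ) • Matrix.diagonal (fun i => ((u α * v i : ℝ) : ℂ))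
      else 0) :
    ∀ α, ∀ i j,
      Y α i j * ((((∑ β, u β) * v i : ℝ) : ℂ) - (((∑ β, u β) * v j : ℝ) : ℂ))
        = 0 := by
  intro α i j
  have hYY : (Y α)ᴴ * Y α = diagonal ((u α : ℂ) • fun i => (v i : ℂ)) := by
    simpa [← two_smul ℂ, Pi.smul_def] using hdiag α α
  have hnormal : IsStarNormal (Y α) :=
    isStarNormal_of_isSymm_of_isSymm_conjTranspose_mul_self (hsym α)
      (hYY ▸ isSymm_diagonal _)
  open scoped ComplexOrder in
  have hv : Y α i j * ((v i : ℂ) - v j) = 0 := stmt_15_general hnormal hYY i j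
  push_cast
  linear_combination (∑ β, (u β : ℂ)) * hv
end
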